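/- arXiv:1005.1902 — 2 statements merged into one kernel-verified Lean document; each statement's English description precedes it below -/
import Mathlib

section
/- Let λ ≥ 2 and suppose θ ∈ S¹ is λ-shrinkable. Then there is a unique geodesic ray ⟨g_i⟩ in F₂ which is a λ-shrinking sequence of θ. Moreover, for this geodesic ray the sequence i ↦ ‖ρ_λ(g_i)θ‖ is strictly monotone decreasing. -/
noncomputable section

abbrev F2 := FreeGroup Bool

def gh : F2 := FreeGroup.of true
def gv : F2 := FreeGroup.of false

def hmat (l : ℝ) : Matrix.SpecialLinearGroup (Fin 2) ℝ :=
  ⟨!![1, l; 0, 1], by norm_num [Matrix.det_fin_two_of]⟩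

def vmat (l : ℝ) : Matrix.SpecialLinearGroup (Fin 2) ℝ :=
  ⟨!![1, 0; l, 1], by norm_num [Matrix.det_fin_two_of]⟩

def rho (l : ℝ) : F2 →* Matrix.SpecialLinearGroup (Fin 2) ℝ :=
  FreeGroup.lift fun b => if b then hmat l else vmat l

def act (l : ℝ) (g : F2) (x : Fin 2 → ℝ) : Fin 2 → ℝ :=
  (rho l g).val.mulVec x

def nrm (x : Fin 2 → ℝ) : ℝ := Real.sqrt (x 0 ^ 2 + x 1 ^ 2)

def Circ : Set (Fin 2 → ℝ) := {x | nrm x = 1}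

def gens : Set F2 := {gh, gv, gh⁻¹, gv⁻¹}

def ShrinkSet (l : ℝ) (g : F2) : Set (Fin 2 → ℝ) :=
  {x | x ∈ Circ ∧ nrm (act l g x) < 1}

def ExpSet (l : ℝ) (g : F2) : Set (Fin 2 → ℝ) :=
  {x | x ∈ Circ ∧ 1 < nrm (act l g x)}

def IsGeodesicRay (g : ℕ → F2) : Prop :=
  g 0 = 1 ∧ (∀ n, g (n + 1) * (g n)⁻¹ ∈ gens) ∧ ∀ n, g (n + 2) * (g n)⁻¹ ≠ 1

def IsGeodesicSegment (g : ℕ → F2) (N : ℕ) : Prop :=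
  g 0 = 1 ∧ (∀ n, n + 1 ≤ N → g (n + 1) * (g n)⁻¹ ∈ gens) ∧
    ∀ n, n + 2 ≤ N → g (n + 2) * (g n)⁻¹ ≠ 1

def IsShrinkingSeq (l : ℝ) (g : ℕ → F2) (θ : Fin 2 → ℝ) : Prop :=
  ∀ ε : ℝ, 0 < ε → ∃ i : ℕ, nrm (act l (g i) θ) < ε

def Shrinkable (l : ℝ) (θ : Fin 2 → ℝ) : Prop :=
  ∀ ε : ℝ, 0 < ε → ∃ g : F2, nrm (act l g θ) < ε

def Renormalizable (l : ℝ) (θ : Fin 2 → ℝ) : Prop :=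
  Shrinkable l θ ∧ ∀ k : F2, ∀ c : ℝ, act l (k * (gh * gv⁻¹) * k⁻¹) θ ≠ c • θ

abbrev SP := Bool × Bool

def Quad (s : SP) : Set (Fin 2 → ℝ) :=
  {x | (if s.1 then 0 < x 0 else x 0 < 0) ∧ (if s.2 then 0 < x 1 else x 1 < 0)}

def letterSigma : Bool × Bool → SP → SP
  | (true, true), s => (s.2, s.2)
  | (false, true), s => (s.1, s.1)
  | (true, false), s => (!s.2, s.2)
  | (false, false), s => (s.1, !s.1)

def SigmaAct (g : F2) : SP → SP :=
  (FreeGroup.toWord g).foldr (fun w acc => letterSigma w ∘ acc) id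

def gammaAut : F2 →* F2 := FreeGroup.lift fun b => if b then gv⁻¹ else gh⁻¹

def rPerm (s : SP) : SP := (!s.2, s.1)

def rPermInv (s : SP) : SP := (s.2, !s.1)

def shiftRay (g : ℕ → F2) : ℕ → F2 := fun n => g (n + 1) * (g 1)⁻¹

def TailEquiv (g g' : ℕ → F2) : Prop :=
  ∃ m n : ℕ, shiftRay^[m] g = shiftRay^[n] g'

def seqPow (a : F2) : ℕ → F2 := fun n => a ^ n

def seqPer (a b : F2) : ℕ → F2 := fun n =>
  if n % 2 = 0 then (b * a) ^ (n / 2) else a * (b * a) ^ (n / 2)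

def Cond1 (g : ℕ → F2) : Prop :=
  ¬ TailEquiv g (seqPow gh) ∧ ¬ TailEquiv g (seqPow gh⁻¹) ∧
    ¬ TailEquiv g (seqPow gv) ∧ ¬ TailEquiv g (seqPow gv⁻¹)

def Cond2 (g : ℕ → F2) : Prop :=
  ¬ TailEquiv g (seqPer gh gv⁻¹) ∧ ¬ TailEquiv g (seqPer gh⁻¹ gv)

def adjSum {V : Type} (G : SimpleGraph V) (f : V → ℝ) (v : V) : ℝ :=
  ∑ᶠ w ∈ G.neighborSet v, f w

def BoundedValance {V : Type} (G : SimpleGraph V) : Prop :=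
  ∃ D : ℕ, ∀ v, (G.neighborSet v).Finite ∧ (G.neighborSet v).ncard ≤ D

def BipartWith {V : Type} (G : SimpleGraph V) (A : Set V) : Prop :=
  ∀ v w, G.Adj v w → (v ∈ A ↔ w ∉ A)

def Hop {V : Type} (G : SimpleGraph V) (A : Set V) (k : ℤ) (f : V → ℝ) : V → ℝ :=
  fun v => f v + (k : ℝ) * Set.indicator A (adjSum G f) v

def Vop {V : Type} (G : SimpleGraph V) (A : Set V) (k : ℤ) (f : V → ℝ) : V → ℝ :=
  fun v => f v + (k : ℝ) * Set.indicator Aᶜ (adjSum G f) v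

def QuadV {V : Type} (A : Set V) (s : SP) : Set (V → ℝ) :=
  {f | (∀ v ∈ A, f v = 0 ∨ (if s.1 then 0 < f v else f v < 0)) ∧
       ∀ v, v ∉ A → f v = 0 ∨ (if s.2 then 0 < f v else f v < 0)}

def valance {V : Type} (G : SimpleGraph V) (v : V) : ℕ := (G.neighborSet v).ncard

def evec {V : Type} (v : V) : V → ℝ := Set.indicator {v} 1

def InSpoke {V : Type} (G : SimpleGraph V) (x : V) : Prop :=
  ∃ k : ℕ, 2 ≤ k ∧ ∃ c : ℕ → V,
    (∀ i j, 1 ≤ i → i ≤ k → 1 ≤ j → j ≤ k → c i = c j → i = j) ∧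
    valance G (c 1) = 1 ∧
    (∀ i, 2 ≤ i → i ≤ k - 1 →
      valance G (c i) = 2 ∧ G.Adj (c i) (c (i - 1)) ∧ G.Adj (c i) (c (i + 1))) ∧
    ∃ i, 1 ≤ i ∧ i ≤ k ∧ x = c i

/-!
View `g ↦ ‖ρ_λ(g) θ‖` as a height function on the Cayley graph of `F₂`. A generator acts as a shear
`yᵢ ↦ yᵢ ± λ yⱼ`. If such a shear shortens `y`, then `|λ yⱼ| < 2 |yᵢ|`, so `|yⱼ| < |yᵢ|`, and the
triangle inequality shows that each of the three other generators lengthens `y`. Hence a vertex with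
a lower neighbour has exactly one, and all its other neighbours are strictly higher.

On a connected graph with this property, a non-backtracking ray that once fails to descend never
descends again, so a ray whose heights attain no minimum is forced, step by step, to be the ray of
descents. Conversely, following descents from any vertex reaches a height at most that of any
prescribed vertex, so the ray of descents does approach the infimum.
-/

/-! ### Descent on graphs -/

section Descent

variable {V α : Type*} [LinearOrder α] {G : SimpleGraph V} {f : V → α}

/-- A height function `f` on the vertices of `G` has unique descent if, at every vertex with a
strictly lower neighbour, all the other neighbours are strictly higher. Vertices without a lower
neighbour are unconstrained. -/
def HasUniqueDescent (G : SimpleGraph V) (f : V → α) : Prop :=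
  ∀ ⦃v u w⦄, G.Adj v u → G.Adj v w → u ≠ w → f u < f v → f v < f w

/-- The relation "`w` is a neighbour of `v` of strictly smaller height". -/
def DescentStep (G : SimpleGraph V) (f : V → α) (v w : V) : Prop :=
  G.Adj v w ∧ f w < f v

/-- An infinite path in `G` that never immediately returns along the edge it came from. On a Cayley
graph of a free group these are the geodesic rays. -/
structure IsNonbacktrackingRay (G : SimpleGraph V) (r : ℕ → V) : Prop where
  adj : ∀ n, G.Adj (r n) (r (n + 1))
  ne : ∀ n, r (n + 2) ≠ r n

theorem IsNonbacktrackingRay.of_forall_descentStep {r : ℕ → V}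
    (hr : ∀ n, DescentStep G f (r n) (r (n + 1))) : IsNonbacktrackingRay G r where
  adj n := (hr n).1
  ne n h := ((hr (n + 1)).2.trans (hr n).2).ne (congrArg f h)

namespace HasUniqueDescent

theorem rightUnique_descentStep (hf : HasUniqueDescent G f) :
    Relator.RightUnique (DescentStep G f) := by
  intro v u w hu hw
  by_contra hne
  exact (hf hu.1 hw.1 hne hu.2).asymm hw.2

theorem exists_reflTransGen_le_of_adj (hf : HasUniqueDescent G f) {a : α} {u v : V}
    (huv : G.Adj u v) (hv : ∃ w, Relation.ReflTransGen (DescentStep G f) v w ∧ f w ≤ a) :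
    ∃ w, Relation.ReflTransGen (DescentStep G f) u w ∧ f w ≤ a := by
  obtain ⟨w, hvw, hwa⟩ := hv
  obtain hlt | hle := lt_or_ge (f v) (f u)
  · exact ⟨w, hvw.head ⟨huv, hlt⟩, hwa⟩
  obtain rfl | ⟨v', hvv', hv'w⟩ := hvw.cases_head
  · exact ⟨u, .refl, hle.trans hwa⟩
  -- Since `v` has a lower neighbour and `f u ≤ f v`, that neighbour can only be `u`.
  obtain rfl : v' = u := by
    by_contra hne
    exact (hf hvv'.1 huv.symm hne hvv'.2).not_ge hle
  exact ⟨w, hv'w, hwa⟩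

theorem exists_reflTransGen_le (hf : HasUniqueDescent G f) (hG : G.Preconnected) (u v : V) :
    ∃ w, Relation.ReflTransGen (DescentStep G f) u w ∧ f w ≤ f v := by
  have huv := (G.reachable_iff_reflTransGen u v).1 (hG u v)
  induction huv using Relation.ReflTransGen.head_induction_on with
  | refl => exact ⟨v, .refl, le_rfl⟩
  | head hadj _ ih => exact hf.exists_reflTransGen_le_of_adj hadj ih

theorem exists_descentStep_of_lt (hf : HasUniqueDescent G f) (hG : G.Preconnected) {u v : V}
    (hvu : f v < f u) : ∃ w, DescentStep G f u w := by
  obtain ⟨w, huw, hwv⟩ := hf.exists_reflTransGen_le hG u v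
  obtain rfl | ⟨u', huu', -⟩ := huw.cases_head
  · exact absurd hvu hwv.not_gt
  · exact ⟨u', huu'⟩

theorem exists_eq_of_reflTransGen (hf : HasUniqueDescent G f) {r : ℕ → V}
    (hr : ∀ n, DescentStep G f (r n) (r (n + 1))) {w : V}
    (hw : Relation.ReflTransGen (DescentStep G f) (r 0) w) : ∃ n, r n = w := by
  induction hw with
  | refl => exact ⟨0, rfl⟩
  | tail _ hstep ih =>
    obtain ⟨n, rfl⟩ := ih
    exact ⟨n + 1, hf.rightUnique_descentStep (hr n) hstep⟩

theorem exists_descending_ray (hf : HasUniqueDescent G f) (hG : G.Preconnected)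
    (hmin : ∀ v, ∃ w, f w < f v) (v₀ : V) :
    ∃ r : ℕ → V, r 0 = v₀ ∧ IsNonbacktrackingRay G r ∧ ∀ v, ∃ n, f (r n) < f v := by
  have hdesc : ∀ v, ∃ w, DescentStep G f v w := fun v ↦
    (hmin v).elim fun _ hw ↦ hf.exists_descentStep_of_lt hG hw
  choose next hnext using hdesc
  have hr : ∀ n, DescentStep G f (next^[n] v₀) (next^[n + 1] v₀) := fun n ↦ by
    rw [Function.iterate_succ_apply']
    exact hnext _
  refine ⟨fun n ↦ next^[n] v₀, rfl, .of_forall_descentStep hr, fun v ↦ ?_⟩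
  obtain ⟨v', hv'⟩ := hmin v
  obtain ⟨w, hw, hwv'⟩ := hf.exists_reflTransGen_le hG v₀ v'
  obtain ⟨n, rfl⟩ := hf.exists_eq_of_reflTransGen hr hw
  exact ⟨n, hwv'.trans_lt hv'⟩

theorem le_succ_of_le_succ (hf : HasUniqueDescent G f) {r : ℕ → V}
    (hr : IsNonbacktrackingRay G r) {n m : ℕ} (hn : f (r n) ≤ f (r (n + 1))) (hnm : n ≤ m) :
    f (r m) ≤ f (r (m + 1)) := by
  induction m, hnm using Nat.le_induction with
  | base => exact hn
  | succ m _ ih =>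
    by_contra! hlt
    exact (hf (hr.adj (m + 1)) (hr.adj m).symm (hr.ne m) hlt).not_ge ih

theorem strictAnti_of_forall_exists_lt (hf : HasUniqueDescent G f) {r : ℕ → V}
    (hr : IsNonbacktrackingRay G r) (hlow : ∀ n, ∃ m, f (r m) < f (r n)) :
    StrictAnti (f ∘ r) := by
  refine strictAnti_nat_of_succ_lt fun n ↦ ?_
  by_contra! hn
  have hge : ∀ m, n ≤ m → f (r n) ≤ f (r m) := fun m hnm ↦ by
    induction m, hnm using Nat.le_induction with
    | base => exact le_rfl
    | succ m hnm ih => exact ih.trans (hf.le_succ_of_le_succ hr hn hnm)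
  obtain ⟨k, -, hk⟩ :=
    (Finset.range (n + 1)).exists_min_image (f ∘ r) Finset.nonempty_range_add_one
  have hk_min : ∀ m, f (r k) ≤ f (r m) := fun m ↦ by
    obtain hmn | hnm := le_total m n
    · exact hk m (Finset.mem_range_succ_iff.2 hmn)
    · exact (hk n (Finset.self_mem_range_succ n)).trans (hge m hnm)
  obtain ⟨m, hm⟩ := hlow k
  exact hm.not_ge (hk_min m)

theorem eq_of_strictAnti (hf : HasUniqueDescent G f) {r s : ℕ → V}
    (hr : IsNonbacktrackingRay G r) (hs : IsNonbacktrackingRay G s) (hrf : StrictAnti (f ∘ r))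
    (hsf : StrictAnti (f ∘ s)) (h₀ : r 0 = s 0) : r = s := by
  funext n
  induction n with
  | zero => exact h₀
  | succ n ih =>
    have hstep_r : DescentStep G f (r n) (r (n + 1)) := ⟨hr.adj n, hrf n.lt_succ_self⟩
    have hstep_s : DescentStep G f (s n) (s (n + 1)) := ⟨hs.adj n, hsf n.lt_succ_self⟩
    exact hf.rightUnique_descentStep hstep_r (ih ▸ hstep_s)

end HasUniqueDescent

end Descent

/-! ### Shears of the plane -/

section Shear

variable {i j : Fin 2} {s t : ℝ} {y : Fin 2 → ℝ}

/-- The shear of the plane adding `t` times the other coordinate to the `i`-th one. These are the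
actions of the generators of `F2` and of their inverses, with `t = ±l`. -/
def shear (i : Fin 2) (t : ℝ) (y : Fin 2 → ℝ) : Fin 2 → ℝ :=
  Function.update y i (y i + t * y i.rev)

theorem shear_shear_neg (i : Fin 2) (t : ℝ) (y : Fin 2 → ℝ) :
    shear i t (shear i (-t) y) = y := by
  ext k
  fin_cases i <;> fin_cases k <;> simp [shear]

theorem nrm_pos (hy : y ≠ 0) : 0 < nrm y := by
  refine Real.sqrt_pos.2 (lt_of_le_of_ne (by positivity) fun h ↦ hy ?_)
  obtain ⟨h₀, h₁⟩ := (add_eq_zero_iff_of_nonneg (sq_nonneg (y 0)) (sq_nonneg (y 1))).1 h.symm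
  ext k
  fin_cases k
  · exact pow_eq_zero_iff two_ne_zero |>.1 h₀
  · exact pow_eq_zero_iff two_ne_zero |>.1 h₁

theorem nrm_shear_lt_iff : nrm (shear i t y) < nrm y ↔ |y i + t * y i.rev| < |y i| := by
  rw [nrm, nrm, Real.sqrt_lt_sqrt_iff (by positivity), ← sq_lt_sq]
  fin_cases i <;> simp [shear]

theorem lt_nrm_shear_iff : nrm y < nrm (shear i t y) ↔ |y i| < |y i + t * y i.rev| := by
  rw [nrm, nrm, Real.sqrt_lt_sqrt_iff (by positivity), ← sq_lt_sq]
  fin_cases i <;> simp [shear]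

theorem nrm_lt_nrm_shear_neg (h : nrm (shear i t y) < nrm y) : nrm y < nrm (shear i (-t) y) := by
  rw [nrm_shear_lt_iff] at h
  rw [lt_nrm_shear_iff]
  have htri : 2 * |y i| ≤ |y i + t * y i.rev| + |y i + -t * y i.rev| := by
    calc 2 * |y i| = |(y i + t * y i.rev) + (y i + -t * y i.rev)| := by
          rw [← abs_two, ← abs_mul]; ring_nf
      _ ≤ _ := abs_add_le _ _
  linarith

theorem two_mul_abs_le_abs_add_mul_add_abs (ht : 2 ≤ |t|) (a b : ℝ) :
    2 * |b| ≤ |a + t * b| + |a| :=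
  calc 2 * |b| ≤ |t| * |b| := by gcongr
    _ = |(a + t * b) - a| := by rw [add_sub_cancel_left, abs_mul]
    _ ≤ |a + t * b| + |a| := abs_sub _ _

theorem abs_rev_lt_of_nrm_shear_lt (ht : 2 ≤ |t|) (h : nrm (shear i t y) < nrm y) :
    |y i.rev| < |y i| := by
  rw [nrm_shear_lt_iff] at h
  linarith [two_mul_abs_le_abs_add_mul_add_abs ht (y i) (y i.rev)]

theorem nrm_lt_nrm_shear_of_abs_lt_abs_rev (ht : 2 ≤ |t|) (h : |y i| < |y i.rev|) :
    nrm y < nrm (shear i t y) := by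
  rw [lt_nrm_shear_iff]
  linarith [two_mul_abs_le_abs_add_mul_add_abs ht (y i) (y i.rev)]

theorem nrm_lt_nrm_shear_of_ne (hij : i ≠ j) (hs : 2 ≤ |s|) (ht : 2 ≤ |t|)
    (h : nrm (shear i s y) < nrm y) : nrm y < nrm (shear j t y) := by
  obtain rfl : i = j.rev := by
    clear h
    revert i j
    decide
  refine nrm_lt_nrm_shear_of_abs_lt_abs_rev ht ?_
  simpa only [Fin.rev_rev] using abs_rev_lt_of_nrm_shear_lt hs h

end Shear

/-! ### The action of the free group -/

section Action

variable {l : ℝ} {x y : Fin 2 → ℝ}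

theorem act_mul (l : ℝ) (a b : F2) (y : Fin 2 → ℝ) : act l (a * b) y = act l a (act l b y) := by
  rw [act, act, act, Matrix.mulVec_mulVec, map_mul, Matrix.SpecialLinearGroup.coe_mul]

theorem act_inv_act (l : ℝ) (a : F2) (y : Fin 2 → ℝ) : act l a⁻¹ (act l a y) = y := by
  rw [← act_mul, inv_mul_cancel]
  simp [act]

theorem act_ne_zero (l : ℝ) (g : F2) (hx : x ≠ 0) : act l g x ≠ 0 := fun h ↦ hx <| by
  rw [← act_inv_act l g x, h, act, Matrix.mulVec_zero]

theorem act_gh (l : ℝ) (y : Fin 2 → ℝ) : act l gh y = shear 0 l y := by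
  ext k
  fin_cases k <;> simp [act, gh, rho, hmat, shear, Matrix.mulVec, dotProduct]

theorem act_gv (l : ℝ) (y : Fin 2 → ℝ) : act l gv y = shear 1 l y := by
  ext k
  fin_cases k <;> simp [act, gv, rho, vmat, shear, Matrix.mulVec, dotProduct, add_comm]

theorem act_gh_inv (l : ℝ) (y : Fin 2 → ℝ) : act l gh⁻¹ y = shear 0 (-l) y := by
  rw [← act_inv_act l gh (shear 0 (-l) y), act_gh, shear_shear_neg]

theorem act_gv_inv (l : ℝ) (y : Fin 2 → ℝ) : act l gv⁻¹ y = shear 1 (-l) y := by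
  rw [← act_inv_act l gv (shear 1 (-l) y), act_gv, shear_shear_neg]

theorem nrm_lt_nrm_act_of_ne (hl : 2 ≤ |l|) {a b : F2} (ha : a ∈ gens) (hb : b ∈ gens)
    (hab : a ≠ b) (h : nrm (act l a y) < nrm y) : nrm y < nrm (act l b y) := by
  have hl' : 2 ≤ |-l| := by rwa [abs_neg]
  rcases ha with rfl | rfl | rfl | rfl <;> rcases hb with rfl | rfl | rfl | rfl <;>
    simp only [act_gh, act_gv, act_gh_inv, act_gv_inv] at h ⊢ <;>
    first
    | exact absurd rfl hab
    | exact nrm_lt_nrm_shear_neg h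
    | simpa only [neg_neg] using nrm_lt_nrm_shear_neg h
    | exact nrm_lt_nrm_shear_of_ne (by decide) (by assumption) (by assumption) h

theorem inv_mem_gens {a : F2} (ha : a ∈ gens) : a⁻¹ ∈ gens := by
  rcases ha with rfl | rfl | rfl | rfl <;> simp [gens]

theorem one_notMem_gens : (1 : F2) ∉ gens := by
  simp [gens, gh, gv, eq_comm (a := (1 : F2))]

theorem closure_gens : Subgroup.closure gens = ⊤ := by
  rw [eq_top_iff, ← FreeGroup.closure_range_of]
  refine Subgroup.closure_mono ?_
  rintro _ ⟨_ | _, rfl⟩ <;> simp [gens, gh, gv]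

/-- The Cayley graph of `F2` whose edges join `g` to `s * g` for `s ∈ gens`. Generators multiply on
the left, as in the definition of a geodesic ray, whereas `SimpleGraph.mulCayley` multiplies on the
right. -/
def leftCayleyGraph : SimpleGraph F2 where
  Adj g k := k * g⁻¹ ∈ gens
  symm := ⟨fun g k h ↦ by simpa using inv_mem_gens h⟩
  loopless := ⟨fun g h ↦ one_notMem_gens (by simpa using h)⟩

theorem leftCayleyGraph_adj_mul {a : F2} (ha : a ∈ gens) (g : F2) :
    leftCayleyGraph.Adj g (a * g) := by
  simpa [leftCayleyGraph] using ha

theorem leftCayleyGraph_preconnected : leftCayleyGraph.Preconnected := by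
  have hreach : ∀ g, leftCayleyGraph.Reachable 1 g := fun g ↦ by
    have hg : g ∈ Subgroup.closure gens := by simp [closure_gens]
    induction hg using Subgroup.closure_induction_left with
    | one => rfl
    | mul_left a ha g _ ih => exact ih.trans (leftCayleyGraph_adj_mul ha g).reachable
    | inv_mul_cancel a ha g _ ih =>
      exact ih.trans (leftCayleyGraph_adj_mul (inv_mem_gens ha) g).reachable
  exact fun g k ↦ (hreach g).symm.trans (hreach k)

theorem isGeodesicRay_iff {g : ℕ → F2} :
    IsGeodesicRay g ↔ g 0 = 1 ∧ IsNonbacktrackingRay leftCayleyGraph g := by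
  simp only [IsGeodesicRay, ne_eq, mul_inv_eq_one]
  exact and_congr_right fun _ ↦ ⟨fun h ↦ ⟨h.1, h.2⟩, fun h ↦ ⟨h.adj, h.ne⟩⟩

theorem hasUniqueDescent_nrm_act (hl : 2 ≤ |l|) (x : Fin 2 → ℝ) :
    HasUniqueDescent leftCayleyGraph fun g ↦ nrm (act l g x) := by
  intro g a b ha hb hab h
  have hact : ∀ k, act l k x = act l (k * g⁻¹) (act l g x) := fun k ↦ by
    rw [← act_mul, inv_mul_cancel_right]
  simp only [hact a, hact b] at h ⊢
  exact nrm_lt_nrm_act_of_ne hl ha hb (by simpa using hab) h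

theorem Shrinkable.exists_nrm_act_lt (hshr : Shrinkable l x) (hx : x ≠ 0) (k : F2) :
    ∃ g, nrm (act l g x) < nrm (act l k x) :=
  hshr _ (nrm_pos (act_ne_zero l k hx))

theorem Shrinkable.isShrinkingSeq_iff (hshr : Shrinkable l x) (hx : x ≠ 0) {g : ℕ → F2} :
    IsShrinkingSeq l g x ↔ ∀ k, ∃ n, nrm (act l (g n) x) < nrm (act l k x) := by
  refine ⟨fun h k ↦ h _ (nrm_pos (act_ne_zero l k hx)), fun h ε hε ↦ ?_⟩
  obtain ⟨k, hk⟩ := hshr ε hε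
  obtain ⟨n, hn⟩ := h k
  exact ⟨n, hn.trans hk⟩

end Action

theorem stmt5_general (l : ℝ) (hl : 2 ≤ |l|) (x : Fin 2 → ℝ) (hx : x ≠ 0)
    (hshr : Shrinkable l x) :
    (∃! g : ℕ → F2, IsGeodesicRay g ∧ IsShrinkingSeq l g x) ∧
    ∀ g : ℕ → F2, IsGeodesicRay g → IsShrinkingSeq l g x →
      StrictAnti fun i => nrm (act l (g i) x) := by
  simp only [isGeodesicRay_iff, hshr.isShrinkingSeq_iff hx]
  have hdesc := hasUniqueDescent_nrm_act hl x
  have hanti : ∀ g : ℕ → F2, IsNonbacktrackingRay leftCayleyGraph g →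
      (∀ k, ∃ n, nrm (act l (g n) x) < nrm (act l k x)) →
      StrictAnti fun i ↦ nrm (act l (g i) x) := fun g hg hlow ↦
    hdesc.strictAnti_of_forall_exists_lt hg fun n ↦ hlow (g n)
  obtain ⟨r, hr₀, hr, hr_low⟩ :=
    hdesc.exists_descending_ray leftCayleyGraph_preconnected (hshr.exists_nrm_act_lt hx) 1
  refine ⟨⟨r, ⟨⟨hr₀, hr⟩, hr_low⟩, ?_⟩, fun g hg ↦ hanti g hg.2⟩
  rintro g ⟨⟨hg₀, hg⟩, hg_low⟩
  exact hdesc.eq_of_strictAnti hg hr (hanti g hg hg_low) (hanti r hr hr_low) (hg₀.trans hr₀.symm)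

theorem stmt5 (l : ℝ) (hl : 2 ≤ l) (x : Fin 2 → ℝ) (hx : x ∈ Circ)
    (hshr : Shrinkable l x) :
    (∃! g : ℕ → F2, IsGeodesicRay g ∧ IsShrinkingSeq l g x) ∧
    ∀ g : ℕ → F2, IsGeodesicRay g → IsShrinkingSeq l g x →
      StrictAnti fun i => nrm (act l (g i) x) := by
  refine stmt5_general l (hl.trans (le_abs_self l)) x ?_ hshr
  rintro rfl
  simp [Circ, nrm] at hx
end
end

section
/- Let λ ≥ 2 and let θ = (x, y) ∈ S¹ be λ-renormalizable. Then: if ‖ρ_λ(h⁻¹)θ‖ < 1, then x ≠ 0 and 0 < y/x < (λ − √(λ² − 4))/2; if ‖ρ_λ(v⁻¹)θ‖ < 1, then x ≠ 0 and y/x > (λ + √(λ² − 4))/2; if ‖ρ_λ(h)θ‖ < 1, then x ≠ 0 and (−λ + √(λ² − 4))/2 < y/x < 0; if ‖ρ_λ(v)θ‖ < 1, then x ≠ 0 and y/x < (−λ − √(λ² − 4))/2. -/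
noncomputable section

/-!
Write `N p = ‖p‖²`. When `λ ≥ 2`, the function `g ↦ N (g p)` is convex on the Cayley tree of `F₂`:
`2 N p ≤ N (a p) + N (b p)` for distinct letters `a` and `b`. Hence, along a reduced word, the norm
never decreases again after a step which does not decrease it.

Let `D p = N p - λ |x y|` for `p = (x, y)`. A letter which contracts `p` does not increase `D`, and
`-2 D p ≤ λ N p`. Following a reduced word until its first non-contracting letter therefore gives
`-2 D p ≤ λ N (g p)` for every `g`, so a shrinkable vector has `0 ≤ D p`. If `D p = 0`, then `p` is
an eigenvector of `h v⁻¹` or of its conjugate `v⁻¹ h`, so `0 < D θ` for renormalizable `θ`. In terms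
of the slope `t = y / x` this says `0 < t² - λ |t| + 1`, and the contracting letter decides the sign
of `t` and on which side of the two roots `|t|` lies.
-/

section Letters

variable (l : ℝ) (e : Bool) (p : Fin 2 → ℝ)

/-- The exponent `±1` of the letter `(b, e)` of a word in `F2`, in the convention of `FreeGroup`:
`(b, true)` stands for a generator and `(b, false)` for its inverse. -/
def letterSign (e : Bool) : ℝ := if e then 1 else -1

lemma abs_letterSign_mul (r : ℝ) : |letterSign e * r| = |r| := by
  cases e <;> simp [letterSign]

lemma letterSign_sq : letterSign e ^ 2 = 1 := by
  cases e <;> simp [letterSign]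

lemma letterSign_not : letterSign (!e) = -letterSign e := by
  cases e <;> simp [letterSign]

lemma act_one : act l 1 p = p := by
  simp [act]

lemma act_mul_s8 (g k : F2) : act l (g * k) p = act l g (act l k p) := by
  rw [act, map_mul, Matrix.SpecialLinearGroup.coe_mul, ← Matrix.mulVec_mulVec, act, act]

lemma act_mk_concat (w : List (Bool × Bool)) (a : Bool × Bool) :
    act l (FreeGroup.mk (w ++ [a])) p = act l (FreeGroup.mk w) (act l (FreeGroup.mk [a]) p) := by
  rw [← FreeGroup.mul_mk, act_mul_s8]

lemma coe_hmat : (hmat l : Matrix (Fin 2) (Fin 2) ℝ) = !![1, l; 0, 1] := rfl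

lemma coe_vmat : (vmat l : Matrix (Fin 2) (Fin 2) ℝ) = !![1, 0; l, 1] := rfl

lemma act_horizontal :
    act l (FreeGroup.mk [(true, e)]) p = ![p 0 + letterSign e * l * p 1, p 1] := by
  ext i
  cases e <;> fin_cases i <;>
    simp [act, rho, coe_hmat, letterSign, Matrix.adjugate_fin_two, Matrix.vecHead, Matrix.vecTail]

lemma act_vertical :
    act l (FreeGroup.mk [(false, e)]) p = ![p 0, p 1 + letterSign e * l * p 0] := by
  ext i
  cases e <;> fin_cases i <;>
    simp [act, rho, coe_vmat, letterSign, Matrix.adjugate_fin_two, Matrix.vecHead,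
      Matrix.vecTail, add_comm (p 1)]

end Letters

section Norm

variable {l : ℝ} {p : Fin 2 → ℝ}

lemma nrm_nonneg (p : Fin 2 → ℝ) : 0 ≤ nrm p :=
  Real.sqrt_nonneg _

lemma nrm_sq (p : Fin 2 → ℝ) : nrm p ^ 2 = p 0 ^ 2 + p 1 ^ 2 :=
  Real.sq_sqrt (by positivity)

/-- The quantity by which a letter `a` changes the squared norm of `p`, divided by `l`. Its sign
tells, for `0 < l`, whether `a` expands or contracts `p`. -/
def letterGain (l : ℝ) (a : Bool × Bool) (p : Fin 2 → ℝ) : ℝ :=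
  l * (if a.1 then p 1 else p 0) ^ 2 + 2 * (letterSign a.2 * (p 0 * p 1))

lemma nrm_sq_act_letter (l : ℝ) (a : Bool × Bool) (p : Fin 2 → ℝ) :
    nrm (act l (FreeGroup.mk [a]) p) ^ 2 = nrm p ^ 2 + l * letterGain l a p := by
  obtain ⟨_ | _, e⟩ := a
  · simp only [nrm_sq, act_vertical, letterGain, Matrix.cons_val, Bool.false_eq_true, if_false]
    linear_combination (l * p 0) ^ 2 * letterSign_sq e
  · simp only [nrm_sq, act_horizontal, letterGain, Matrix.cons_val, if_true]
    linear_combination (l * p 1) ^ 2 * letterSign_sq e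

lemma nrm_act_letter_lt_iff (hl : 0 < l) (a : Bool × Bool) (p : Fin 2 → ℝ) :
    nrm (act l (FreeGroup.mk [a]) p) < nrm p ↔ letterGain l a p < 0 := by
  rw [← sq_lt_sq₀ (nrm_nonneg _) (nrm_nonneg _), nrm_sq_act_letter, add_lt_iff_neg_left]
  exact smul_neg_iff_of_pos_left hl

lemma letterGain_add_nonneg (hl : 2 ≤ l) {a b : Bool × Bool} (hab : a ≠ b) (p : Fin 2 → ℝ) :
    0 ≤ letterGain l a p + letterGain l b p := by
  have hx : 0 ≤ (l - 2) * p 0 ^ 2 := mul_nonneg (sub_nonneg.2 hl) (sq_nonneg _)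
  have hy : 0 ≤ (l - 2) * p 1 ^ 2 := mul_nonneg (sub_nonneg.2 hl) (sq_nonneg _)
  obtain ⟨_ | _, _ | _⟩ := a <;> obtain ⟨_ | _, _ | _⟩ := b <;>
    simp only [letterGain, letterSign, Bool.false_eq_true, if_true, if_false, ne_eq,
      not_true_eq_false] at hab ⊢ <;>
    nlinarith [sq_nonneg (p 0 - p 1), sq_nonneg (p 0 + p 1)]

lemma two_mul_nrm_sq_le_add (hl : 2 ≤ l) {a b : Bool × Bool} (hab : a ≠ b) (p : Fin 2 → ℝ) :
    2 * nrm p ^ 2 ≤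
      nrm (act l (FreeGroup.mk [a]) p) ^ 2 + nrm (act l (FreeGroup.mk [b]) p) ^ 2 := by
  have hgain := mul_nonneg (zero_le_two.trans hl) (letterGain_add_nonneg hl hab p)
  rw [nrm_sq_act_letter, nrm_sq_act_letter]
  linarith

lemma nrm_le_nrm_act_of_isReduced_concat (hl : 2 ≤ l) {w : List (Bool × Bool)} {a : Bool × Bool}
    (hw : FreeGroup.IsReduced (w ++ [a])) (ha : nrm p ≤ nrm (act l (FreeGroup.mk [a]) p)) :
    nrm p ≤ nrm (act l (FreeGroup.mk (w ++ [a])) p) := by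
  induction w using List.reverseRecOn generalizing p a with
  | nil => exact ha
  | append_singleton w b ih =>
    set ap := act l (FreeGroup.mk [a]) p with hap
    have hback : act l (FreeGroup.mk [(a.1, !a.2)]) ap = p := by
      rw [show FreeGroup.mk [(a.1, !a.2)] = (FreeGroup.mk [a])⁻¹ from rfl, hap, ← act_mul_s8,
        inv_mul_cancel, act_one]
    have hba : FreeGroup.IsReduced [b, a] := hw.infix ⟨w, [], by simp⟩
    have hne : (a.1, !a.2) ≠ b := by
      rintro rfl
      simp at hba
    have hconvex := two_mul_nrm_sq_le_add hl hne ap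
    rw [hback] at hconvex
    have hb : nrm ap ≤ nrm (act l (FreeGroup.mk [b]) ap) :=
      (sq_le_sq₀ (nrm_nonneg _) (nrm_nonneg _)).1
        (by linarith [pow_le_pow_left₀ (nrm_nonneg p) ha 2])
    rw [act_mk_concat]
    exact ha.trans (ih (hw.infix ⟨[], [a], by simp⟩) hb)

end Norm

section GapForm

variable {l : ℝ} {p : Fin 2 → ℝ}

/-- The smaller of the quadratic forms `x² - l x y + y²` and `x² + l x y + y²` (for `0 ≤ l`). The
first is preserved by `h v⁻¹`, the second by `v⁻¹ h`, and each vanishes on the eigenlines of that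
element. Twice its negative bounds `l * nrm ^ 2` from below on the whole `F2`-orbit. -/
def gapForm (l : ℝ) (p : Fin 2 → ℝ) : ℝ :=
  nrm p ^ 2 - l * |p 0 * p 1|

lemma gapForm_le (hl : 0 ≤ l) (e : Bool) (p : Fin 2 → ℝ) :
    gapForm l p ≤ nrm p ^ 2 + l * (letterSign e * (p 0 * p 1)) := by
  have habs := neg_abs_le (letterSign e * (p 0 * p 1))
  rw [abs_letterSign_mul] at habs
  rw [gapForm]
  linarith [mul_le_mul_of_nonneg_left habs hl]

lemma neg_two_mul_gapForm_le (hl : 0 ≤ l) (p : Fin 2 → ℝ) :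
    -2 * gapForm l p ≤ l * nrm p ^ 2 := by
  have hamgm : 2 * |p 0 * p 1| ≤ nrm p ^ 2 := by
    rw [nrm_sq, abs_mul, ← sq_abs (p 0), ← sq_abs (p 1), ← mul_assoc]
    exact two_mul_le_add_sq _ _
  rw [gapForm]
  linarith [mul_le_mul_of_nonneg_left hamgm hl, sq_nonneg (nrm p)]

lemma gapForm_act_letter_le (hl : 0 < l) {a : Bool × Bool}
    (ha : nrm (act l (FreeGroup.mk [a]) p) < nrm p) :
    gapForm l (act l (FreeGroup.mk [a]) p) ≤ gapForm l p := by
  obtain ⟨b, e⟩ := a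
  rw [nrm_act_letter_lt_iff hl] at ha
  have hsign : letterSign e * (p 0 * p 1) < 0 := by
    have := mul_nonneg hl.le (sq_nonneg (if b then p 1 else p 0))
    simp only [letterGain] at ha
    linarith
  have hp : gapForm l p = nrm p ^ 2 + l * (letterSign e * (p 0 * p 1)) := by
    rw [gapForm, ← abs_letterSign_mul e, abs_of_neg hsign]
    ring
  rw [hp]
  -- With `ε = letterSign e`, the letter carries `x² + y² + ε l x y` to `x² + y² - ε l x y`.
  refine (gapForm_le hl.le (!e) _).trans_eq ?_
  cases b
  · simp only [nrm_sq, act_vertical, letterSign_not, Matrix.cons_val]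
    ring
  · simp only [nrm_sq, act_horizontal, letterSign_not, Matrix.cons_val]
    ring

lemma neg_two_mul_gapForm_le_act (hl : 2 ≤ l) (g : F2) (p : Fin 2 → ℝ) :
    -2 * gapForm l p ≤ l * nrm (act l g p) ^ 2 := by
  have hl₀ : 0 < l := two_pos.trans_le hl
  suffices hword : ∀ w : List (Bool × Bool), FreeGroup.IsReduced w → ∀ p,
      -2 * gapForm l p ≤ l * nrm (act l (FreeGroup.mk w) p) ^ 2 by
    simpa only [FreeGroup.mk_toWord] using hword g.toWord FreeGroup.isReduced_toWord p
  intro w hw p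
  induction w using List.reverseRecOn generalizing p with
  | nil => simpa only [← FreeGroup.one_eq_mk, act_one] using neg_two_mul_gapForm_le hl₀.le p
  | append_singleton w a ih =>
    rcases lt_or_ge (nrm (act l (FreeGroup.mk [a]) p)) (nrm p) with hcontract | hexpand
    · rw [act_mk_concat]
      linarith [gapForm_act_letter_le hl₀ hcontract,
        ih (hw.infix ⟨[], [a], by simp⟩) (act l (FreeGroup.mk [a]) p)]
    · have hnrm := nrm_le_nrm_act_of_isReduced_concat hl hw hexpand
      calc -2 * gapForm l p ≤ l * nrm p ^ 2 := neg_two_mul_gapForm_le hl₀.le p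
        _ ≤ l * nrm (act l (FreeGroup.mk (w ++ [a])) p) ^ 2 := by
          gcongr
          exact nrm_nonneg p

lemma Shrinkable.gapForm_nonneg (hl : 2 ≤ l) (hp : Shrinkable l p) : 0 ≤ gapForm l p := by
  by_contra! hneg
  have hl₀ : 0 < l := two_pos.trans_le hl
  obtain ⟨g, hg⟩ := hp √(-2 * gapForm l p / l) (Real.sqrt_pos.2 (div_pos (by linarith) hl₀))
  rw [Real.lt_sqrt (nrm_nonneg _), lt_div_iff₀' hl₀] at hg
  exact hg.not_ge (neg_two_mul_gapForm_le_act hl g p)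

end GapForm

section Renormalizable

variable {l : ℝ} {p : Fin 2 → ℝ}

lemma exists_eq_smul_of_mul_eq_mul {K : Type*} [Field K] {p q : Fin 2 → K} (hp : p ≠ 0)
    (h : p 0 * q 1 = p 1 * q 0) : ∃ c : K, q = c • p := by
  by_cases hp₀ : p 0 = 0
  · have hp₁ : p 1 ≠ 0 := fun hp₁ => hp (by ext i; fin_cases i <;> assumption)
    have hq₀ : q 0 = 0 := by simpa [hp₀, hp₁] using h
    refine ⟨q 1 / p 1, ?_⟩
    ext i
    fin_cases i <;> simp [hp₀, hq₀, hp₁]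
  · refine ⟨q 0 / p 0, ?_⟩
    ext i
    fin_cases i
    · simp [hp₀]
    · simp only [Fin.mk_one, Pi.smul_apply, smul_eq_mul]
      field_simp
      linear_combination h

lemma Renormalizable.ne_zero (hp : Renormalizable l p) : p ≠ 0 := by
  rintro rfl
  exact hp.2 1 0 (by simp [act])

lemma Renormalizable.nrm_sq_sub_ne_zero (hp : Renormalizable l p) :
    nrm p ^ 2 - l * (p 0 * p 1) ≠ 0 := by
  intro hzero
  rw [nrm_sq] at hzero
  obtain ⟨c, hc⟩ : ∃ c : ℝ, act l (gh * gv⁻¹) p = c • p := by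
    refine exists_eq_smul_of_mul_eq_mul hp.ne_zero ?_
    rw [act_mul_s8, show gv⁻¹ = FreeGroup.mk [(false, false)] from rfl, act_vertical,
      show gh = FreeGroup.mk [(true, true)] from rfl, act_horizontal]
    simp only [letterSign, Matrix.cons_val, Bool.false_eq_true, if_true, if_false]
    linear_combination (-l) * hzero
  exact hp.2 1 c (by simpa using hc)

lemma Renormalizable.nrm_sq_add_ne_zero (hp : Renormalizable l p) :
    nrm p ^ 2 + l * (p 0 * p 1) ≠ 0 := by
  intro hzero
  rw [nrm_sq] at hzero
  obtain ⟨c, hc⟩ : ∃ c : ℝ, act l (gv⁻¹ * gh) p = c • p := by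
    refine exists_eq_smul_of_mul_eq_mul hp.ne_zero ?_
    rw [act_mul_s8, show gh = FreeGroup.mk [(true, true)] from rfl, act_horizontal,
      show gv⁻¹ = FreeGroup.mk [(false, false)] from rfl, act_vertical]
    simp only [letterSign, Matrix.cons_val, Bool.false_eq_true, if_true, if_false]
    linear_combination (-l) * hzero
  have hconj : gh⁻¹ * (gh * gv⁻¹) * gh⁻¹⁻¹ = gv⁻¹ * gh := by group
  exact hp.2 gh⁻¹ c (by rwa [hconj])

lemma Renormalizable.gapForm_pos (hl : 2 ≤ l) (hp : Renormalizable l p) : 0 < gapForm l p := by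
  refine (hp.1.gapForm_nonneg hl).lt_of_ne' ?_
  rcases abs_choice (p 0 * p 1) with habs | habs <;> rw [gapForm, habs]
  · exact hp.nrm_sq_sub_ne_zero
  · rw [mul_neg, sub_neg_eq_add]
    exact hp.nrm_sq_add_ne_zero

end Renormalizable

section Slope

variable {l s : ℝ} {e : Bool} {p : Fin 2 → ℝ}

lemma lt_smaller_root (hpos : 0 < s ^ 2 - l * s + 1) (hs : s < l / 2) :
    s < (l - √(l ^ 2 - 4)) / 2 := by
  have hsqrt : √(l ^ 2 - 4) < l - 2 * s := (Real.sqrt_lt' (by linarith)).2 (by linarith)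
  linarith

lemma larger_root_lt (hpos : 0 < s ^ 2 - l * s + 1) (hs : l / 2 < s) :
    (l + √(l ^ 2 - 4)) / 2 < s := by
  have hsqrt : √(l ^ 2 - 4) < 2 * s - l := (Real.sqrt_lt' (by linarith)).2 (by linarith)
  linarith

lemma quadratic_slope_pos (hl : 0 ≤ l) (hgap : 0 < gapForm l p) (hp₀ : p 0 ≠ 0) (e : Bool) :
    0 < (-letterSign e * (p 1 / p 0)) ^ 2 - l * (-letterSign e * (p 1 / p 0)) + 1 := by
  have hform := hgap.trans_le (gapForm_le hl e p)
  rw [nrm_sq] at hform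
  refine (div_pos hform (sq_pos_of_ne_zero hp₀)).trans_eq ?_
  field_simp
  linear_combination -p 1 ^ 2 * letterSign_sq e

lemma slope_of_horizontal_contraction (hl : 2 ≤ l) (hgap : 0 < gapForm l p)
    (hcontract : nrm (act l (FreeGroup.mk [(true, e)]) p) < nrm p) :
    p 0 ≠ 0 ∧ 0 < -letterSign e * (p 1 / p 0) ∧
      -letterSign e * (p 1 / p 0) < (l - √(l ^ 2 - 4)) / 2 := by
  have hl₀ : 0 < l := two_pos.trans_le hl
  have hgain : l * p 1 ^ 2 + 2 * (letterSign e * (p 0 * p 1)) < 0 :=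
    (nrm_act_letter_lt_iff hl₀ _ p).1 hcontract
  have hp₀ : p 0 ≠ 0 := by
    intro hp₀
    rw [hp₀, zero_mul, mul_zero, mul_zero, add_zero] at hgain
    exact hgain.not_ge (by positivity)
  have hroots := quadratic_slope_pos hl₀.le hgap hp₀ e
  set s := -letterSign e * (p 1 / p 0) with hs
  have hslope : s * (l * s - 2) < 0 := by
    refine (div_neg_of_neg_of_pos hgain (sq_pos_of_ne_zero hp₀)).trans_eq' ?_
    rw [hs]
    field_simp
    linear_combination -(l * p 1 ^ 2) * letterSign_sq e
  have hs₀ : 0 < s := by nlinarith [mul_nonneg hl₀.le (sq_nonneg s)]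
  have hls : l * s < 2 := by linarith [neg_of_mul_neg_right hslope hs₀.le]
  exact ⟨hp₀, hs₀, lt_smaller_root hroots (by nlinarith)⟩

lemma slope_of_vertical_contraction (hl : 0 < l) (hgap : 0 < gapForm l p)
    (hcontract : nrm (act l (FreeGroup.mk [(false, e)]) p) < nrm p) :
    p 0 ≠ 0 ∧ (l + √(l ^ 2 - 4)) / 2 < -letterSign e * (p 1 / p 0) := by
  have hgain : l * p 0 ^ 2 + 2 * (letterSign e * (p 0 * p 1)) < 0 :=
    (nrm_act_letter_lt_iff hl _ p).1 hcontract
  have hp₀ : p 0 ≠ 0 := by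
    intro hp₀
    simp [hp₀] at hgain
  have hslope : l - 2 * (-letterSign e * (p 1 / p 0)) < 0 := by
    refine (div_neg_of_neg_of_pos hgain (sq_pos_of_ne_zero hp₀)).trans_eq' ?_
    field_simp
    ring
  exact ⟨hp₀, larger_root_lt (quadratic_slope_pos hl.le hgap hp₀ e) (by linarith)⟩

end Slope

theorem stmt8 (l : ℝ) (hl : 2 ≤ l) (x : Fin 2 → ℝ) (hx : x ∈ Circ)
    (hren : Renormalizable l x) :
    (nrm (act l gh⁻¹ x) < 1 →
      x 0 ≠ 0 ∧ 0 < x 1 / x 0 ∧ x 1 / x 0 < (l - Real.sqrt (l ^ 2 - 4)) / 2) ∧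
    (nrm (act l gv⁻¹ x) < 1 →
      x 0 ≠ 0 ∧ (l + Real.sqrt (l ^ 2 - 4)) / 2 < x 1 / x 0) ∧
    (nrm (act l gh x) < 1 →
      x 0 ≠ 0 ∧ (-l + Real.sqrt (l ^ 2 - 4)) / 2 < x 1 / x 0 ∧ x 1 / x 0 < 0) ∧
    (nrm (act l gv x) < 1 →
      x 0 ≠ 0 ∧ x 1 / x 0 < (-l - Real.sqrt (l ^ 2 - 4)) / 2) := by
  have hl₀ : 0 < l := two_pos.trans_le hl
  have hgap : 0 < gapForm l x := hren.gapForm_pos hl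
  have hnrm : nrm x = 1 := hx
  rw [← hnrm]
  refine ⟨fun h => ?_, fun h => ?_, fun h => ?_, fun h => ?_⟩
  · simpa [letterSign] using slope_of_horizontal_contraction (e := false) hl hgap h
  · simpa [letterSign] using slope_of_vertical_contraction (e := false) hl₀ hgap h
  · obtain ⟨hx₀, hpos, hlt⟩ := slope_of_horizontal_contraction (e := true) hl hgap h
    simp only [letterSign, if_true, neg_one_mul] at hpos hlt
    exact ⟨hx₀, by linarith, by linarith⟩
  · obtain ⟨hx₀, hlt⟩ := slope_of_vertical_contraction (e := true) hl₀ hgap h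
    simp only [letterSign, if_true, neg_one_mul] at hlt
    exact ⟨hx₀, by linarith⟩
end
end
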